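/- arXiv:1505.07763 — 2 statements merged into one kernel-verified Lean document; each statement's English description precedes it below -/
import Mathlib

section
/- Let f be a nonzero smooth compactly supported function on ℝⁿ, p > 1, q its conjugate. Let L_f = {ξ : ‖∇_ξ f‖_p ≤ 1}, C_f*(x) = ∫_{S^{n-1}} ‖∇_ξ f‖_p^{-(n+p)} |⟨x,ξ⟩|^p dξ, C_f its Legendre transform, and K_f = {x : C_f(x) ≤ 1}. Then K_f = ((n+p) vol(L_f) a₁)^{1/p} ℓ_q^{-1/p} Γ_p L_f, where a₁ = ω_{n+p}/(ω₂ ω_n ω_{p-1}), ℓ_q = q^{-p/q} p^{-1}, and Γ_p L_f is the L_p-centroid body of L_f. -/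
open MeasureTheory Real
open scoped RealInnerProductSpace Pointwise

noncomputable section

/-- `ω_s = π^(s/2) / Γ(s/2 + 1)`. -/
def omegaR (s : ℝ) : ℝ := Real.pi ^ (s / 2) / Real.Gamma (s / 2 + 1)

/-- `a₁ = ω_{n+p} / (ω₂ ω_n ω_{p-1})`. -/
def aOne (n : ℕ) (p : ℝ) : ℝ := omegaR (n + p) / (omegaR 2 * omegaR n * omegaR (p - 1))

/-- The `L^p` norm of the directional derivative `∇_ξ f = ⟨∇f, ξ⟩`. -/
def dirDerivLpNorm (n : ℕ) (p : ℝ) (f : EuclideanSpace ℝ (Fin n) → ℝ)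
    (ξ : EuclideanSpace ℝ (Fin n)) : ℝ :=
  (∫ y, |⟪gradient f y, ξ⟫| ^ p) ^ (1 / p)

/-- `C_f*(x) = ∫_{S^{n-1}} ‖∇_ξ f‖_p^{-(n+p)} |⟨x, ξ⟩|^p dξ`. -/
def Cfstar (n : ℕ) (p : ℝ) (f : EuclideanSpace ℝ (Fin n) → ℝ)
    (x : EuclideanSpace ℝ (Fin n)) : ℝ :=
  ∫ ξ : Metric.sphere (0 : EuclideanSpace ℝ (Fin n)) 1,
    dirDerivLpNorm n p f ξ ^ (-(n + p : ℝ)) * |⟪x, (ξ : EuclideanSpace ℝ (Fin n))⟫| ^ p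
      ∂(volume : Measure (EuclideanSpace ℝ (Fin n))).toSphere

/-- The Legendre transform. -/
def legendre {n : ℕ} (C : EuclideanSpace ℝ (Fin n) → ℝ) (x : EuclideanSpace ℝ (Fin n)) : ℝ :=
  ⨆ y : EuclideanSpace ℝ (Fin n), (⟪x, y⟫ - C y)

/-- The `L_p`-centroid body `Γ_p L`, described through its support function
`h_{Γ_p L}(v) = ((1/(a₁ vol(L))) ∫_L |⟨v, x⟩|^p dx)^{1/p}`. -/
def centroidBody (n : ℕ) (p : ℝ) (L : Set (EuclideanSpace ℝ (Fin n))) :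
    Set (EuclideanSpace ℝ (Fin n)) :=
  {x | ∀ v : EuclideanSpace ℝ (Fin n),
    ⟪x, v⟫ ≤ ((aOne n p * (volume L).toReal)⁻¹ * ∫ y in L, |⟪v, y⟫| ^ p) ^ (1 / p)}

/-- In polar coordinates, the integral of a `p`-homogeneous function over the unit ball of a gauge
`N` becomes an integral over the unit sphere. -/
theorem setIntegral_sublevel_eq_integral_toSphere {E : Type*} [NormedAddCommGroup E]
    [NormedSpace ℝ E] [FiniteDimensional ℝ E] [Nontrivial E] [MeasurableSpace E] [BorelSpace E]
    (μ : Measure E) [μ.IsAddHaarMeasure] {p : ℝ} (hp : 0 < p) {N g : E → ℝ}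
    (hN : Measurable N) (hNpos : ∀ x ≠ 0, 0 < N x)
    (hNhom : ∀ (t : ℝ) (x : E), 0 < t → N (t • x) = t * N x)
    (hghom : ∀ (t : ℝ) (x : E), 0 < t → g (t • x) = t ^ p * g x)
    (hgint : IntegrableOn g {x | N x ≤ 1} μ) :
    ∫ x in {x | N x ≤ 1}, g x ∂μ =
      (Module.finrank ℝ E + p)⁻¹ * ∫ ξ : Metric.sphere (0 : E) 1,
        N ξ ^ (-(Module.finrank ℝ E + p : ℝ)) * g ξ ∂μ.toSphere := by
  set d := Module.finrank ℝ E with hd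
  have hdpos : 0 < d := Module.finrank_pos
  have hL : MeasurableSet {x | N x ≤ 1} := measurableSet_le hN measurable_const
  set G : E → ℝ := Set.indicator {x | N x ≤ 1} g with hG
  have hGint : Integrable G μ := (integrable_indicator_iff hL).2 hgint
  set F : Metric.sphere (0 : E) 1 × Set.Ioi (0 : ℝ) → ℝ := fun z => G (z.2.1 • z.1.1) with hF
  have hcomp : ∀ x : ({0}ᶜ : Set E), F (homeomorphUnitSphereProd E x) = G x := by
    intro x
    have hx : ‖(x : E)‖ ≠ 0 := norm_ne_zero_iff.2 x.2
    simp [hF, smul_smul, hx]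
  have hmp := μ.measurePreserving_homeomorphUnitSphereProd
  have hemb := (homeomorphUnitSphereProd E).measurableEmbedding
  have hFint : Integrable F (μ.toSphere.prod (.volumeIoiPow (d - 1))) := by
    rw [← hmp.integrable_comp_emb hemb]
    have : F ∘ homeomorphUnitSphereProd E = G ∘ Subtype.val := funext hcomp
    rw [this, ← integrableOn_iff_comap_subtypeVal (by measurability)]
    exact hGint.integrableOn
  have hinner : ∀ ξ : Metric.sphere (0 : E) 1,
      ∫ r, F (ξ, r) ∂(.volumeIoiPow (d - 1)) =
        (d + p : ℝ)⁻¹ * (N ξ ^ (-(d + p : ℝ)) * g ξ) := by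
    intro ξ
    have hξ : 0 < N ξ := hNpos _ (by
      have := ξ.2
      intro h
      simp [h] at this)
    have hb : 0 < (N ξ)⁻¹ := inv_pos.2 hξ
    have hexp : (-1 : ℝ) < d - 1 + p := by
      have : (0 : ℝ) < d := by exact_mod_cast hdpos
      linarith
    simp only [Measure.volumeIoiPow, ENNReal.ofReal]
    rw [integral_withDensity_eq_integral_smul (by fun_prop),
      integral_subtype_comap measurableSet_Ioi fun a : ℝ =>
        Real.toNNReal (a ^ (d - 1)) • G (a • (ξ : E))]
    have hint : ∀ r ∈ Set.Ioi (0 : ℝ), Real.toNNReal (r ^ (d - 1)) • G (r • (ξ : E)) =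
        Set.indicator (Set.Ioc 0 (N ξ)⁻¹) (fun r : ℝ => r ^ ((d : ℝ) - 1 + p) * g ξ) r := by
      intro r hr
      have hr : 0 < r := hr
      have hmem : r • (ξ : E) ∈ {x | N x ≤ 1} ↔ r ∈ Set.Ioc 0 (N ξ)⁻¹ := by
        simp only [Set.mem_ofPred_eq, hNhom r _ hr, Set.mem_Ioc, hr, true_and]
        rw [← one_div, le_div_iff₀ hξ]
      by_cases h : r • (ξ : E) ∈ {x | N x ≤ 1}
      · rw [hG, Set.indicator_of_mem h, Set.indicator_of_mem (hmem.1 h), hghom r _ hr,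
          NNReal.smul_def, Real.coe_toNNReal _ (by positivity), smul_eq_mul, ← mul_assoc,
          Real.rpow_add hr, ← Nat.cast_pred hdpos, Real.rpow_natCast]
      · rw [hG, Set.indicator_of_notMem h, Set.indicator_of_notMem (fun h' => h (hmem.2 h')),
          smul_zero]
    rw [setIntegral_congr_fun measurableSet_Ioi hint, setIntegral_indicator measurableSet_Ioc,
      Set.inter_eq_right.2 Set.Ioc_subset_Ioi_self, integral_mul_const,
      ← intervalIntegral.integral_of_le hb.le, integral_rpow (Or.inl hexp),
      show (d : ℝ) - 1 + p + 1 = d + p by ring, Real.zero_rpow (by linarith), sub_zero,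
      Real.inv_rpow hξ.le, Real.rpow_neg hξ.le]
    ring
  calc ∫ x in {x | N x ≤ 1}, g x ∂μ = ∫ x, G x ∂μ := (integral_indicator hL).symm
    _ = ∫ x : ({0}ᶜ : Set E), G x ∂(μ.comap (↑)) := by
      rw [integral_subtype_comap (measurableSet_singleton _).compl G, restrict_compl_singleton]
    _ = ∫ z, F z ∂μ.toSphere.prod (.volumeIoiPow (d - 1)) := by
      rw [← hmp.integral_comp hemb]
      exact integral_congr_ae (.of_forall fun x => (hcomp x).symm)
    _ = _ := by
      rw [integral_prod _ hFint, ← integral_const_mul]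
      exact integral_congr_ae (.of_forall hinner)

theorem mul_sub_rpow_mul_le {p q : ℝ} (hpq : p.HolderConjugate q) {a c t : ℝ} (ha : 0 ≤ a)
    (hc : 0 < c) (ht : 0 ≤ t) :
    t * a - t ^ p * c ≤ (a / (p * c) ^ (1 / p)) ^ q / q := by
  have hp := hpq.pos
  have hA : 0 < (p * c) ^ (1 / p) := by positivity
  have hAp : ((p * c) ^ (1 / p)) ^ p = p * c := by
    rw [← Real.rpow_mul (by positivity), one_div_mul_cancel hp.ne', Real.rpow_one]
  have h := Real.young_inequality_of_nonneg (mul_nonneg ht hA.le) (div_nonneg ha hA.le) hpq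
  rw [Real.mul_rpow ht hA.le, hAp] at h
  have h1 : t * (p * c) ^ (1 / p) * (a / (p * c) ^ (1 / p)) = t * a := by field_simp
  have h2 : t ^ p * (p * c) / p = t ^ p * c := by field_simp
  linarith

theorem forall_mul_sub_rpow_mul_le_one_iff {p q : ℝ} (hpq : p.HolderConjugate q) {a c : ℝ}
    (ha : 0 < a) (hc : 0 < c) :
    (∀ t : ℝ, 0 < t → t * a - t ^ p * c ≤ 1) ↔ a ≤ q ^ (1 / q) * (p * c) ^ (1 / p) := by
  have hp := hpq.pos
  have hq := hpq.symm.pos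
  have hA : 0 < (p * c) ^ (1 / p) := by positivity
  have hAp : ((p * c) ^ (1 / p)) ^ p = p * c := by
    rw [← Real.rpow_mul (by positivity), one_div_mul_cancel hp.ne', Real.rpow_one]
  have key : a ≤ q ^ (1 / q) * (p * c) ^ (1 / p) ↔ (a / (p * c) ^ (1 / p)) ^ q / q ≤ 1 := by
    rw [← div_le_iff₀ hA, div_le_one hq, one_div q,
      Real.le_rpow_inv_iff_of_pos (by positivity) hq.le hq]
  rw [key]
  refine ⟨fun h => ?_, fun h t ht => (mul_sub_rpow_mul_le hpq ha.le hc ht.le).trans h⟩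
  set A := (p * c) ^ (1 / p) with hAdef
  set b := a / A with hb
  have hb0 : 0 < b := by positivity
  have ht := h (b ^ (q / p) / A) (by positivity)
  have h1 : b ^ (q / p) / A * a = b ^ q := by
    rw [div_mul_eq_mul_div, mul_div_assoc, ← hb, ← Real.rpow_add_one hb0.ne',
      hpq.symm.div_conj_eq_sub_one, sub_add_cancel]
  have h2 : (b ^ (q / p) / A) ^ p * c = b ^ q * p⁻¹ := by
    rw [Real.div_rpow (by positivity) hA.le, hAp, ← Real.rpow_mul hb0.le,
      div_mul_cancel₀ _ hp.ne']
    field_simp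
  rw [h1, h2] at ht
  rw [div_eq_mul_inv, ← hpq.one_sub_inv]
  linarith

theorem omegaR_pos {s : ℝ} (hs : -2 < s) : 0 < omegaR s :=
  div_pos (Real.rpow_pos_of_pos Real.pi_pos _) (Real.Gamma_pos_of_pos (by linarith))

theorem aOne_pos (n : ℕ) {p : ℝ} (hp : 1 < p) : 0 < aOne n p := by
  have hn : (0 : ℝ) ≤ n := n.cast_nonneg
  exact div_pos (omegaR_pos (by linarith)) (mul_pos (mul_pos (omegaR_pos (by norm_num))
    (omegaR_pos (by linarith))) (omegaR_pos (by linarith)))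

section DirectionalDerivative

variable {n : ℕ} {p : ℝ} {f : EuclideanSpace ℝ (Fin n) → ℝ}

theorem dirDerivLpNorm_eq_fderiv (ξ : EuclideanSpace ℝ (Fin n)) :
    dirDerivLpNorm n p f ξ = (∫ y, |fderiv ℝ f y ξ| ^ p) ^ (1 / p) := by
  simp only [dirDerivLpNorm, inner_gradient_left]

theorem continuous_dirDerivLpNorm (hp : 0 < p) (hf : ContDiff ℝ 1 f)
    (hsupp : HasCompactSupport f) : Continuous (dirDerivLpNorm n p f) := by
  have hcont : Continuous (fun z : EuclideanSpace ℝ (Fin n) × EuclideanSpace ℝ (Fin n) =>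
      |fderiv ℝ f z.2 z.1| ^ p) := by
    have h := hf.continuous_fderiv one_ne_zero
    exact ((by fun_prop : Continuous fun z : EuclideanSpace ℝ (Fin n) ×
      EuclideanSpace ℝ (Fin n) => |fderiv ℝ f z.2 z.1|)).rpow_const fun _ => Or.inr hp.le
  have hEq : dirDerivLpNorm n p f =
      fun ξ => (∫ y in tsupport f, |fderiv ℝ f y ξ| ^ p) ^ (1 / p) := by
    funext ξ
    rw [dirDerivLpNorm_eq_fderiv, setIntegral_eq_integral_of_forall_compl_eq_zero]
    intro y hy
    simp [fderiv_of_notMem_tsupport ℝ hy, Real.zero_rpow hp.ne']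
  rw [hEq]
  exact (continuous_parametric_integral_of_continuous
    (f := fun ξ y => |fderiv ℝ f y ξ| ^ p) hcont hsupp).rpow_const
    fun _ => Or.inr (by positivity)

theorem dirDerivLpNorm_smul (hp : 0 < p) {t : ℝ} (ht : 0 ≤ t) (ξ : EuclideanSpace ℝ (Fin n)) :
    dirDerivLpNorm n p f (t • ξ) = t * dirDerivLpNorm n p f ξ := by
  simp only [dirDerivLpNorm_eq_fderiv, map_smul, smul_eq_mul, abs_mul, abs_of_nonneg ht]
  simp only [Real.mul_rpow ht (abs_nonneg _), integral_const_mul]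
  rw [Real.mul_rpow (by positivity) (integral_nonneg fun _ => by positivity),
    ← Real.rpow_mul ht, mul_one_div_cancel hp.ne', Real.rpow_one]

theorem eq_zero_of_forall_fderiv_apply_eq_zero {E : Type*} [NormedAddCommGroup E]
    [NormedSpace ℝ E] {f : E → ℝ} (hf : Differentiable ℝ f) (hsupp : HasCompactSupport f) {ξ : E}
    (hξ : ξ ≠ 0) (h : ∀ y, fderiv ℝ f y ξ = 0) : f = 0 := by
  funext x
  have hline : ∀ t : ℝ, HasDerivAt (fun t : ℝ => f (x + t • ξ)) 0 t := fun t => by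
    have h1 : HasDerivAt (fun t : ℝ => x + t • ξ) ξ t := by
      simpa using ((hasDerivAt_id t).smul_const ξ).const_add x
    have h2 := (hf (x + t • ξ)).hasFDerivAt.comp_hasDerivAt t h1
    rwa [h] at h2
  have hconst : ∀ t : ℝ, f (x + t • ξ) = f x := fun t => by
    simpa using is_const_of_deriv_eq_zero (fun t => (hline t).differentiableAt)
      (fun t => (hline t).deriv) t 0
  obtain ⟨R, hR⟩ := hsupp.isCompact.isBounded.subset_closedBall x
  have hout : x + ((|R| + 1) / ‖ξ‖) • ξ ∉ tsupport f := fun hmem => by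
    have h1 := hR hmem
    have h2 : (0 : ℝ) < |R| + 1 := by positivity
    rw [mem_closedBall_iff_norm, add_sub_cancel_left, norm_smul, norm_div, norm_norm,
      div_mul_cancel₀ _ (norm_ne_zero_iff.2 hξ), Real.norm_of_nonneg h2.le] at h1
    linarith [le_abs_self R]
  rw [← hconst, image_eq_zero_of_notMem_tsupport hout, Pi.zero_apply]

theorem dirDerivLpNorm_pos (hp : 0 < p) (hf : ContDiff ℝ 1 f) (hsupp : HasCompactSupport f)
    (hne : f ≠ 0) {ξ : EuclideanSpace ℝ (Fin n)} (hξ : ξ ≠ 0) : 0 < dirDerivLpNorm n p f ξ := by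
  obtain ⟨y, hy⟩ : ∃ y, fderiv ℝ f y ξ ≠ 0 := by
    by_contra! h
    exact hne (eq_zero_of_forall_fderiv_apply_eq_zero (hf.differentiable one_ne_zero) hsupp hξ h)
  have hcont : Continuous fun y => |fderiv ℝ f y ξ| ^ p := by
    have h := hf.continuous_fderiv one_ne_zero
    exact (by fun_prop : Continuous fun y => |fderiv ℝ f y ξ|).rpow_const fun _ => Or.inr hp.le
  have hcomp : HasCompactSupport fun y => |fderiv ℝ f y ξ| ^ p :=
    (hsupp.fderiv ℝ).comp_left (g := fun A : EuclideanSpace ℝ (Fin n) →L[ℝ] ℝ => |A ξ| ^ p)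
      (by simp [Real.zero_rpow hp.ne'])
  rw [dirDerivLpNorm_eq_fderiv]
  exact Real.rpow_pos_of_pos (hcont.integral_pos_of_hasCompactSupport_nonneg_nonzero hcomp
    (fun y => Real.rpow_nonneg (abs_nonneg _) p)
    (Real.rpow_pos_of_pos (abs_pos.2 hy) p).ne') _

end DirectionalDerivative

section Gauge

variable {E : Type*} [NormedAddCommGroup E] [InnerProductSpace ℝ E]

theorem isBounded_sublevel_of_homogeneous [FiniteDimensional ℝ E] {N : E → ℝ} (hN : Continuous N)
    (hNpos : ∀ x ≠ 0, 0 < N x)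
    (hNhom : ∀ (t : ℝ) (x : E), 0 < t → N (t • x) = t * N x) :
    Bornology.IsBounded {x | N x ≤ 1} := by
  rcases subsingleton_or_nontrivial E with _ | _
  · exact (Set.toFinite _).isBounded
  obtain ⟨ξ, hξ, hmin⟩ := (isCompact_sphere (0 : E) 1).exists_isMinOn
    (NormedSpace.sphere_nonempty.2 zero_le_one) hN.continuousOn
  have hm : 0 < N ξ := hNpos ξ (by rintro rfl; simp at hξ)
  refine Metric.isBounded_closedBall.subset (?_ : _ ⊆ Metric.closedBall (0 : E) (N ξ)⁻¹)
  intro x hx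
  rw [mem_closedBall_zero_iff]
  rcases eq_or_ne x 0 with rfl | hx0
  · simpa using hm.le
  have hxn : 0 < ‖x‖ := norm_pos_iff.2 hx0
  have h1 : N ξ ≤ N (‖x‖⁻¹ • x) := hmin (by simp [norm_smul, hxn.ne'])
  rw [hNhom _ _ (inv_pos.2 hxn), inv_mul_eq_div, le_div_iff₀ hxn] at h1
  rw [← one_div, le_div_iff₀ hm, mul_comm]
  exact h1.trans hx

variable [FiniteDimensional ℝ E] [MeasurableSpace E] [BorelSpace E] {p : ℝ}

theorem integrableOn_abs_inner_rpow (μ : Measure E) [IsFiniteMeasureOnCompacts μ] (hp : 0 ≤ p)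
    {L : Set E} (hL : Bornology.IsBounded L) (v : E) :
    IntegrableOn (fun y => |⟪v, y⟫| ^ p) L μ := by
  have hc : Continuous fun y : E => |⟪v, y⟫| ^ p :=
    (by fun_prop : Continuous fun y : E => |⟪v, y⟫|).rpow_const fun _ => Or.inr hp
  exact (hc.continuousOn.integrableOn_compact hL.isCompact_closure).mono_set subset_closure

theorem exists_mul_norm_rpow_le_setIntegral (μ : Measure E)
    [μ.IsAddHaarMeasure] (hp : 0 < p) {L : Set E} (hL : Bornology.IsBounded L)
    (hL0 : L ∈ nhds 0) :
    ∃ c > 0, ∀ v : E, c * ‖v‖ ^ p ≤ ∫ y in L, |⟪v, y⟫| ^ p ∂μ := by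
  obtain ⟨r, hr, hball⟩ := Metric.mem_nhds_iff.1 hL0
  refine ⟨(r / 4) ^ p * μ.real (Metric.ball 0 (r / 4)), mul_pos (by positivity)
    (ENNReal.toReal_pos (Metric.measure_ball_pos μ _ (by positivity)).ne'
      measure_ball_lt_top.ne), fun v => ?_⟩
  rcases eq_or_ne v 0 with rfl | hv
  · simp [Real.zero_rpow hp.ne']
  have hvn : 0 < ‖v‖ := norm_pos_iff.2 hv
  set x₀ : E := (r / 2 / ‖v‖) • v with hx₀
  have hx₀n : ‖x₀‖ = r / 2 := by
    rw [hx₀, norm_smul, Real.norm_of_nonneg (by positivity), div_mul_cancel₀ _ hvn.ne']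
  have hx₀v : ⟪v, x₀⟫ = r / 2 * ‖v‖ := by
    rw [hx₀, inner_smul_right, real_inner_self_eq_norm_sq]
    field_simp
  have hsub : Metric.ball x₀ (r / 4) ⊆ L := fun y hy => hball <| by
    rw [mem_ball_iff_norm] at hy
    rw [mem_ball_zero_iff]
    linarith [norm_le_norm_add_norm_sub x₀ y, norm_sub_rev x₀ y, norm_sub_norm_le y x₀]
  have hint := integrableOn_abs_inner_rpow μ hp.le hL v
  calc (r / 4) ^ p * μ.real (Metric.ball 0 (r / 4)) * ‖v‖ ^ p
      = ∫ _ in Metric.ball x₀ (r / 4), (r / 4 * ‖v‖) ^ p ∂μ := by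
        rw [setIntegral_const, smul_eq_mul, Real.mul_rpow (by positivity) hvn.le,
          measureReal_def, measureReal_def, Measure.addHaar_ball_center μ x₀]
        ring
    _ ≤ ∫ y in Metric.ball x₀ (r / 4), |⟪v, y⟫| ^ p ∂μ := by
        refine setIntegral_mono_on (integrableOn_const measure_ball_lt_top.ne) (hint.mono_set hsub)
          Metric.isOpen_ball.measurableSet fun y hy => ?_
        refine Real.rpow_le_rpow (by positivity) (le_trans ?_ (le_abs_self _)) hp.le
        rw [mem_ball_iff_norm] at hy
        have h1 : ⟪v, y⟫ = ⟪v, x₀⟫ + ⟪v, y - x₀⟫ := by rw [← inner_add_right, add_sub_cancel]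
        have h2 := (abs_le.1 (abs_real_inner_le_norm v (y - x₀))).1
        have h3 : ‖v‖ * ‖y - x₀‖ ≤ ‖v‖ * (r / 4) := by gcongr
        rw [h1, hx₀v]
        linarith
    _ ≤ ∫ y in L, |⟪v, y⟫| ^ p ∂μ :=
        setIntegral_mono_set hint (.of_forall fun _ => by positivity) hsub.eventuallyLE

end Gauge

theorem setOf_legendre_le_one {n : ℕ} {p q c : ℝ} (hpq : p.HolderConjugate q) (hc : 0 < c)
    {C : EuclideanSpace ℝ (Fin n) → ℝ}
    (hhom : ∀ (t : ℝ) (y : EuclideanSpace ℝ (Fin n)), 0 < t → C (t • y) = t ^ p * C y)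
    (hlow : ∀ y, c * ‖y‖ ^ p ≤ C y) :
    {x | legendre C x ≤ 1} = {x | ∀ y, ⟪x, y⟫ ≤ q ^ (1 / q) * (p * C y) ^ (1 / p)} := by
  have hp := hpq.pos
  have hq := hpq.symm.pos
  have hCnn : ∀ y, 0 ≤ C y := fun y => (by positivity : 0 ≤ c * ‖y‖ ^ p).trans (hlow y)
  ext x
  simp only [Set.mem_ofPred_eq]
  have hbdd : BddAbove (Set.range fun y => ⟪x, y⟫ - C y) := by
    refine ⟨_, Set.forall_mem_range.2 fun y => le_trans ?_
      (mul_sub_rpow_mul_le hpq (norm_nonneg x) hc (norm_nonneg y))⟩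
    linarith [hlow y, real_inner_le_norm x y]
  rw [legendre, ciSup_le_iff hbdd]
  have hray : ∀ y, (0 < ⟪x, y⟫) → ((∀ t : ℝ, 0 < t → ⟪x, t • y⟫ - C (t • y) ≤ 1) ↔
      ⟪x, y⟫ ≤ q ^ (1 / q) * (p * C y) ^ (1 / p)) := fun y hy => by
    have hy0 : y ≠ 0 := by rintro rfl; simp at hy
    have hCy : 0 < C y := lt_of_lt_of_le (by positivity) (hlow y)
    rw [← forall_mul_sub_rpow_mul_le_one_iff hpq hy hCy]
    refine forall₂_congr fun t ht => ?_
    rw [real_inner_smul_right, hhom t y ht]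
  constructor
  · intro h y
    rcases le_or_gt ⟪x, y⟫ 0 with hy | hy
    · exact hy.trans (mul_nonneg (by positivity)
        (Real.rpow_nonneg (mul_nonneg hp.le (hCnn y)) _))
    · exact (hray y hy).1 fun t _ => h _
  · intro h y
    rcases le_or_gt ⟪x, y⟫ 0 with hy | hy
    · linarith [hCnn y]
    · simpa using (hray y hy).2 (h y) 1 one_pos

/-- `K_f = ((n+p) vol(L_f) a₁)^{1/p} ℓ_q^{-1/p} Γ_p L_f`. -/
theorem Kf_eq_dilated_centroid_body (n : ℕ) (hn : 1 ≤ n) (p q : ℝ) (hp : 1 < p)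
    (hpq : 1 / p + 1 / q = 1) (f : EuclideanSpace ℝ (Fin n) → ℝ) (hf : ContDiff ℝ (⊤ : ℕ∞) f)
    (hsupp : HasCompactSupport f) (hne : f ≠ 0) :
    {x : EuclideanSpace ℝ (Fin n) | legendre (Cfstar n p f) x ≤ 1} =
      ((((n : ℝ) + p) *
            (volume {ξ : EuclideanSpace ℝ (Fin n) | dirDerivLpNorm n p f ξ ≤ 1}).toReal *
            aOne n p) ^ (1 / p) * (q ^ (-(p / q)) * p⁻¹) ^ (-(1 / p))) •
        centroidBody n p {ξ : EuclideanSpace ℝ (Fin n) | dirDerivLpNorm n p f ξ ≤ 1} := by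
  have hp0 : 0 < p := by linarith
  have hconj : p.HolderConjugate q := by
    rw [Real.holderConjugate_iff]
    exact ⟨hp, by simpa using hpq⟩
  have hq0 : 0 < q := hconj.symm.pos
  have : Nontrivial (EuclideanSpace ℝ (Fin n)) :=
    Module.nontrivial_of_finrank_pos (R := ℝ) (by rwa [finrank_euclideanSpace_fin])
  have hf1 : ContDiff ℝ 1 f := hf.of_le (by exact_mod_cast le_top)
  set N := dirDerivLpNorm n p f
  have hN : Continuous N := continuous_dirDerivLpNorm hp0 hf1 hsupp
  have hNpos : ∀ x ≠ 0, 0 < N x := fun x hx => dirDerivLpNorm_pos hp0 hf1 hsupp hne hx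
  have hNhom : ∀ (t : ℝ) (x : EuclideanSpace ℝ (Fin n)), 0 < t → N (t • x) = t * N x :=
    fun t x ht => dirDerivLpNorm_smul hp0 ht.le x
  have hN0 : N 0 = 0 := by
    simpa using dirDerivLpNorm_smul (f := f) hp0 le_rfl (0 : EuclideanSpace ℝ (Fin n))
  set L := {ξ : EuclideanSpace ℝ (Fin n) | N ξ ≤ 1} with hLdef
  have hLb : Bornology.IsBounded L := isBounded_sublevel_of_homogeneous hN hNpos hNhom
  have hL0 : L ∈ nhds 0 :=
    hN.continuousAt.eventually_le_const (by rw [hN0]; exact zero_lt_one)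
  have hVpos : 0 < (volume L).toReal :=
    ENNReal.toReal_pos (Measure.measure_pos_of_mem_nhds volume hL0).ne' hLb.measure_lt_top.ne
  have hnp : 0 < (n : ℝ) + p := by positivity
  have hpolar : ∀ v, Cfstar n p f v = (n + p) * ∫ y in L, |⟪v, y⟫| ^ p := fun v => by
    have h := setIntegral_sublevel_eq_integral_toSphere volume hp0 (N := N)
      (g := fun y => |⟪v, y⟫| ^ p) hN.measurable hNpos hNhom
      (fun t x ht => by
        rw [real_inner_smul_right, abs_mul, abs_of_pos ht, Real.mul_rpow ht.le (abs_nonneg _)])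
      (integrableOn_abs_inner_rpow volume hp0.le hLb v)
    rw [finrank_euclideanSpace_fin] at h
    rw [hLdef, h, ← mul_assoc, mul_inv_cancel₀ hnp.ne', one_mul]
    rfl
  obtain ⟨c, hc, hlow⟩ := exists_mul_norm_rpow_le_setIntegral volume hp0 hLb hL0
  have hInn : ∀ v, 0 ≤ ∫ y in L, |⟪v, y⟫| ^ p := fun v => integral_nonneg fun _ => by positivity
  rw [setOf_legendre_le_one hconj (mul_pos hnp hc) (C := Cfstar n p f)
    (fun t y ht => by
      simp only [hpolar, real_inner_smul_left, abs_mul, abs_of_pos ht,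
        Real.mul_rpow ht.le (abs_nonneg _), integral_const_mul]
      ring)
    (fun y => by
      rw [hpolar, mul_assoc]
      exact mul_le_mul_of_nonneg_left (hlow y) hnp.le)]
  have ha := aOne_pos n hp
  set V := (volume L).toReal
  have hlam : 0 < (((n : ℝ) + p) * V * aOne n p) ^ (1 / p) *
      (q ^ (-(p / q)) * p⁻¹) ^ (-(1 / p)) := by
    positivity
  ext x
  rw [Set.mem_smul_set_iff_inv_smul_mem₀ hlam.ne']
  simp only [centroidBody, Set.mem_ofPred_eq]
  refine forall_congr' fun v => ?_
  rw [real_inner_smul_left, inv_mul_le_iff₀ hlam, hpolar]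
  have hconst : (q ^ (-(p / q)) * p⁻¹) ^ (-(1 / p)) = q ^ (1 / q) * p ^ (1 / p) := by
    rw [Real.mul_rpow (by positivity) (by positivity), ← Real.rpow_mul hq0.le,
      Real.inv_rpow hp0.le, Real.rpow_neg hp0.le, inv_inv]
    congr 2
    field_simp
  have hRHS : (((n : ℝ) + p) * V * aOne n p) ^ (1 / p) * (q ^ (-(p / q)) * p⁻¹) ^ (-(1 / p)) *
      ((aOne n p * V)⁻¹ * ∫ y in L, |⟪v, y⟫| ^ p) ^ (1 / p) =
      q ^ (1 / q) * (p * ((n + p) * ∫ y in L, |⟪v, y⟫| ^ p)) ^ (1 / p) := by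
    rw [hconst, mul_left_comm, mul_assoc (q ^ (1 / q)), ← Real.mul_rpow (by positivity) hp0.le,
      ← Real.mul_rpow (by positivity) (mul_nonneg (by positivity) (hInn v))]
    congr 2
    field_simp
  rw [hRHS]
end
end

section
/- Affine L_∞ log-Sobolev inequality: for n ≥ 1, β > 0, and any Lipschitz function f on ℝⁿ with ∫ e^{βf} dx = 1, one has Ent(e^{βf}) ≤ n log((β k_n/e) 𝓔_∞(f)), where 𝓔_∞(f) = (nω_n)^{1/n} (∫_{S^{n-1}} ‖∇_ξ f‖_∞^{-n} dξ)^{-1/n} and k_n = (n! ω_n)^{-1/n}. This may assume as a hypothesis Fujita's general L_∞ log-Sobolev inequality: Ent(e^{βf}) ≤ n log((β/e)(∫ e^{-H})^{-1/n} ‖H̄(∇f)‖_∞) for any norm H with dual norm H̄. -/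
open MeasureTheory Real
open scoped RealInnerProductSpace

noncomputable section

/-- `ω_n`, the volume of the unit ball of `ℝⁿ`. -/
def omegaN (n : ℕ) : ℝ := (volume (Metric.ball (0 : EuclideanSpace ℝ (Fin n)) 1)).toReal

/-- `k_n = (n! ω_n)^{-1/n}`. -/
def kn (n : ℕ) : ℝ := ((n.factorial : ℝ) * omegaN n) ^ (-(1 / (n : ℝ)))

/-- `‖∇_ξ f‖_∞ = ess sup_x |⟨∇f(x), ξ⟩|`. -/
def dirDerivLinftyNorm (n : ℕ) (f : EuclideanSpace ℝ (Fin n) → ℝ)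
    (ξ : EuclideanSpace ℝ (Fin n)) : ℝ :=
  essSup (fun x => |⟪gradient f x, ξ⟫|) volume

/-- The affine `L_∞` energy
`𝓔_∞(f) = (n ω_n)^{1/n} (∫_{S^{n-1}} ‖∇_ξ f‖_∞^{-n} dξ)^{-1/n}`. -/
def affineEnergyInfty (n : ℕ) (f : EuclideanSpace ℝ (Fin n) → ℝ) : ℝ :=
  ((n : ℝ) * omegaN n) ^ (1 / (n : ℝ)) *
    (∫ ξ : Metric.sphere (0 : EuclideanSpace ℝ (Fin n)) 1,
        dirDerivLinftyNorm n f (ξ : EuclideanSpace ℝ (Fin n)) ^ (-(n : ℝ))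
          ∂(volume : Measure (EuclideanSpace ℝ (Fin n))).toSphere) ^ (-(1 / (n : ℝ)))

section LineInvariance

variable {E : Type*} [NormedAddCommGroup E] [InnerProductSpace ℝ E] [FiniteDimensional ℝ E]

theorem LipschitzWith.norm_gradient_le {K : NNReal} {f : E → ℝ} (hf : LipschitzWith K f) (x : E) :
    ‖gradient f x‖ ≤ K := by
  rw [gradient, LinearIsometryEquiv.norm_map]
  exact norm_fderiv_le_of_lipschitz ℝ hf

variable [MeasurableSpace E] [BorelSpace E]

/-- A property which holds almost everywhere holds almost everywhere on almost every line in a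
given direction. -/
theorem ae_ae_add_smul {p : E → Prop} (hp : ∀ᵐ x, p x) (v : E) :
    ∀ᵐ x : E, ∀ᵐ t : ℝ, p (x + t • v) := by
  obtain ⟨s, hs, hsm, hs0⟩ := exists_measurable_superset_of_null (ae_iff.1 hp)
  have hmeas : MeasurableSet {z : E × ℝ | z.1 + z.2 • v ∉ s} :=
    (show Measurable fun z : E × ℝ => z.1 + z.2 • v by fun_prop) hsm.compl
  have key : ∀ᵐ x : E, ∀ᵐ t : ℝ, x + t • v ∉ s := by
    rw [Measure.ae_ae_comm (p := fun (x : E) (t : ℝ) => x + t • v ∉ s) hmeas]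
    refine .of_forall fun t => ?_
    have h : ∀ᵐ x : E, x ∉ s := by rwa [ae_iff, show {a | ¬ a ∉ s} = s by ext; simp]
    exact (measurePreserving_add_right (volume : Measure E) (t • v)).quasiMeasurePreserving.ae h
  filter_upwards [key] with x hx
  filter_upwards [hx] with t ht
  by_contra hpt
  exact ht (hs hpt)

theorem LipschitzWith.add_smul_eq_of_ae_inner_gradient_eq_zero {K : NNReal} {f : E → ℝ}
    (hf : LipschitzWith K f) {v : E} (hv : ∀ᵐ x, ⟪gradient f x, v⟫ = 0) (x : E) (t : ℝ) :
    f (x + t • v) = f x := by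
  have hd : ∀ᵐ x : E, DifferentiableAt ℝ f x ∧ ⟪gradient f x, v⟫ = 0 :=
    (hf.ae_differentiableAt (μ := volume)).and hv
  have hae : (fun x : E => f (x + t • v)) =ᵐ[volume] f := by
    filter_upwards [ae_ae_add_smul hd v] with y hy
    have hlip : LipschitzWith (K * ‖v‖₊) (fun s : ℝ => f (y + s • v)) := by
      refine hf.comp (LipschitzWith.of_dist_le_mul fun a b => ?_)
      rw [dist_add_left, dist_eq_norm, ← sub_smul, norm_smul, dist_eq_norm, mul_comm]
      rfl
    obtain ⟨C, hC⟩ := (hlip.lipschitzOnWith (s := Set.uIcc 0 t)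
      ).absolutelyContinuousOnInterval.const_of_ae_hasDerivAt_zero <| by
        filter_upwards [hy] with s hs _
        have h1 : HasDerivAt (fun s : ℝ => y + s • v) v s := by
          simpa using ((hasDerivAt_id s).smul_const v).const_add y
        have h2 := hs.1.hasGradientAt.hasFDerivAt.comp_hasDerivAt s h1
        rw [InnerProductSpace.toDual_apply_apply, hs.2] at h2
        exact h2
    have h0 := hC 0 Set.left_mem_uIcc
    have h1 := hC t Set.right_mem_uIcc
    simp only [zero_smul, add_zero] at h0
    exact h1.trans h0.symm
  exact congrFun ((Continuous.ae_eq_iff_eq volume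
    (hf.continuous.comp (by fun_prop)) hf.continuous).1 hae) x

theorem LipschitzWith.not_integrable_exp_of_add_smul_eq {K : NNReal} {f : E → ℝ}
    (hf : LipschitzWith K f) {v : E} (hv0 : v ≠ 0) (hv : ∀ x (t : ℝ), f (x + t • v) = f x)
    {β : ℝ} (hβ : 0 < β) : ¬ Integrable fun x => Real.exp (β * f x) := by
  intro hintegrable
  have hvn : 0 < ‖v‖ := norm_pos_iff.2 hv0
  let B : ℕ → Set E := fun k => Metric.ball ((k * (2 / ‖v‖)) • v) 1
  have hsub : ⋃ k, B k ⊆ {x | Real.exp (β * (f 0 - K)) ≤ Real.exp (β * f x)} := by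
    refine Set.iUnion_subset fun k x hx => ?_
    have h1 := hf.dist_le_mul ((k * (2 / ‖v‖)) • v) x
    have h2 : f ((k * (2 / ‖v‖)) • v) = f 0 := by simpa using hv 0 (k * (2 / ‖v‖))
    rw [h2, Real.dist_eq, dist_comm] at h1
    have h3 : (K : ℝ) * dist x ((k * (2 / ‖v‖)) • v) ≤ K * 1 :=
      mul_le_mul_of_nonneg_left (Metric.mem_ball.1 hx).le K.2
    have h4 := le_abs_self (f 0 - f x)
    exact Real.exp_le_exp.2 (mul_le_mul_of_nonneg_left (by linarith) hβ.le)
  have hfin : volume (⋃ k, B k) ≠ ⊤ :=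
    ((measure_mono hsub).trans_lt (hintegrable.measure_ge_lt_top (Real.exp_pos _))).ne
  have hdisj : Pairwise (Function.onFun Disjoint B) := by
    intro i j hij
    refine Metric.ball_disjoint_ball ?_
    rw [dist_eq_norm, ← sub_smul, norm_smul, ← sub_mul, norm_mul,
      Real.norm_of_nonneg (by positivity : 0 ≤ 2 / ‖v‖), mul_assoc, div_mul_cancel₀ _ hvn.ne']
    have : (1 : ℝ) ≤ ‖(i : ℝ) - j‖ := by
      have h : (1 : ℤ) ≤ |(i : ℤ) - j| := Int.one_le_abs (by omega)
      rw [Real.norm_eq_abs]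
      exact_mod_cast h
    linarith
  have hpos : 0 < volume (Metric.ball (0 : E) 1) := Metric.measure_ball_pos _ _ one_pos
  have := Measure.finite_const_le_meas_of_disjoint_iUnion volume hpos
    (fun i => Metric.isOpen_ball.measurableSet) hdisj hfin
  refine Set.infinite_univ (this.subset fun i _ => ?_)
  exact (Measure.addHaar_ball_center volume _ 1).ge

end LineInvariance

section Polar

variable {E : Type*} [NormedAddCommGroup E] [NormedSpace ℝ E] [FiniteDimensional ℝ E]
  [Nontrivial E] [MeasurableSpace E] [BorelSpace E]

/-- Integration in polar coordinates. -/
theorem lintegral_eq_lintegral_toSphere (μ : Measure E) [μ.IsAddHaarMeasure]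
    {g : E → ENNReal} (hg : Measurable g) :
    ∫⁻ x, g x ∂μ = ∫⁻ ξ : Metric.sphere (0 : E) 1, (∫⁻ r in Set.Ioi (0 : ℝ),
      ENNReal.ofReal (r ^ (Module.finrank ℝ E - 1)) * g (r • (ξ : E))) ∂μ.toSphere := by
  have hmp := μ.measurePreserving_homeomorphUnitSphereProd
  have hmeas : Measurable fun p : Metric.sphere (0 : E) 1 × Set.Ioi (0 : ℝ) =>
      g ((p.2 : ℝ) • (p.1 : E)) := hg.comp (by fun_prop)
  calc ∫⁻ x, g x ∂μ
      = ∫⁻ x : ({0}ᶜ : Set E), g x ∂(μ.comap (↑)) := by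
        rw [lintegral_subtype_comap (measurableSet_singleton _).compl, restrict_compl_singleton]
    _ = ∫⁻ p, g ((p.2 : ℝ) • (p.1 : E))
          ∂μ.toSphere.prod (.volumeIoiPow (Module.finrank ℝ E - 1)) := by
        rw [← hmp.lintegral_comp hmeas]
        refine lintegral_congr fun x => ?_
        have := congrArg Subtype.val ((homeomorphUnitSphereProd E).symm_apply_apply x)
        rw [homeomorphUnitSphereProd_symm_apply_coe] at this
        rw [this]
    _ = _ := by
        rw [lintegral_prod _ hmeas.aemeasurable]
        refine lintegral_congr fun ξ => ?_
        have hξ : Measurable fun r : Set.Ioi (0 : ℝ) => g ((r : ℝ) • (ξ : E)) :=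
          hg.comp (by fun_prop)
        rw [Measure.volumeIoiPow, lintegral_withDensity_eq_lintegral_mul _ (by fun_prop) hξ,
          ← lintegral_subtype_comap measurableSet_Ioi]
        rfl

/-- The integral of `exp (-H)`, for `H` positively homogeneous, in terms of the values of `H` on
the unit sphere. -/
theorem integral_exp_neg_eq_factorial_mul_integral_toSphere (μ : Measure E) [μ.IsAddHaarMeasure]
    {H : E → ℝ} (hc : Continuous H) (hsmul : ∀ (l : ℝ) x, H (l • x) = |l| * H x)
    (hpos : ∀ x, x ≠ 0 → 0 < H x) :
    ∫ x, Real.exp (-(H x)) ∂μ = ((Module.finrank ℝ E - 1).factorial : ℝ) *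
      ∫ ξ : Metric.sphere (0 : E) 1, H (ξ : E) ^ (-(Module.finrank ℝ E : ℝ)) ∂μ.toSphere := by
  have hHpos : ∀ ξ : Metric.sphere (0 : E) 1, 0 < H (ξ : E) := fun ξ =>
    hpos _ (ne_zero_of_mem_unit_sphere ξ)
  obtain ⟨m, hm⟩ : ∃ m, Module.finrank ℝ E = m + 1 :=
    Nat.exists_eq_succ_of_ne_zero Module.finrank_pos.ne'
  rw [← integral_const_mul,
    integral_eq_lintegral_of_nonneg_ae (.of_forall fun x => (Real.exp_pos _).le)
      (by fun_prop),
    integral_eq_lintegral_of_nonneg_ae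
      (.of_forall fun ξ => mul_nonneg (Nat.cast_nonneg _) (Real.rpow_nonneg (hHpos ξ).le _))
      ((((hc.comp continuous_subtype_val).rpow_const
        fun ξ => Or.inl (hHpos ξ).ne').const_mul _).aestronglyMeasurable),
    lintegral_eq_lintegral_toSphere μ (by fun_prop)]
  congr 1
  refine lintegral_congr fun ξ => ?_
  have hΓ := Real.integral_rpow_mul_exp_neg_mul_Ioi (a := (m : ℝ) + 1) (by positivity) (hHpos ξ)
  have hval : (1 / H (ξ : E)) ^ ((m : ℝ) + 1) * Real.Gamma ((m : ℝ) + 1) =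
      (m.factorial : ℝ) * H (ξ : E) ^ (-((m : ℝ) + 1)) := by
    rw [Real.Gamma_nat_eq_factorial, one_div, Real.inv_rpow (hHpos ξ).le,
      Real.rpow_neg (hHpos ξ).le, mul_comm]
  have hfac : 0 < (m.factorial : ℝ) := by exact_mod_cast m.factorial_pos
  have hintegrable : IntegrableOn (fun t => t ^ ((m : ℝ) + 1 - 1) * Real.exp (-(H (ξ : E) * t)))
      (Set.Ioi 0) := .of_integral_ne_zero (by
    rw [hΓ, hval]
    exact (mul_pos hfac (Real.rpow_pos_of_pos (hHpos ξ) _)).ne')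
  rw [hm, Nat.add_sub_cancel, Nat.cast_succ, ← hval, ← hΓ,
    ofReal_integral_eq_lintegral_ofReal hintegrable]
  · refine setLIntegral_congr_fun measurableSet_Ioi fun r hr => ?_
    have hr0 : 0 < r := hr
    simp only [hsmul, abs_of_pos hr0, add_sub_cancel_right, Real.rpow_natCast]
    rw [ENNReal.ofReal_mul (by positivity), mul_comm r]
  · filter_upwards [ae_restrict_mem measurableSet_Ioi] with r hr
    exact mul_nonneg (Real.rpow_nonneg (le_of_lt hr) _) (Real.exp_pos _).le

end Polar

section DirDeriv

variable {n : ℕ} {f : EuclideanSpace ℝ (Fin n) → ℝ} {K : NNReal}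

theorem LipschitzWith.abs_inner_gradient_le (hf : LipschitzWith K f)
    (x ξ : EuclideanSpace ℝ (Fin n)) : |⟪gradient f x, ξ⟫| ≤ K * ‖ξ‖ :=
  (abs_real_inner_le_norm _ _).trans
    (mul_le_mul_of_nonneg_right (hf.norm_gradient_le x) (norm_nonneg _))

theorem LipschitzWith.ae_abs_inner_gradient_le_dirDerivLinftyNorm (hf : LipschitzWith K f)
    (ξ : EuclideanSpace ℝ (Fin n)) :
    ∀ᵐ x, |⟪gradient f x, ξ⟫| ≤ dirDerivLinftyNorm n f ξ :=
  ae_le_essSup (Filter.isBoundedUnder_of ⟨K * ‖ξ‖, fun x => hf.abs_inner_gradient_le x ξ⟩)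

theorem dirDerivLinftyNorm_le {ξ : EuclideanSpace ℝ (Fin n)} {c : ℝ}
    (h : ∀ᵐ x, |⟪gradient f x, ξ⟫| ≤ c) : dirDerivLinftyNorm n f ξ ≤ c :=
  essSup_le_of_ae_le c h
    (Filter.IsBoundedUnder.isCoboundedUnder_le
      (Filter.isBoundedUnder_of ⟨0, fun _ => abs_nonneg _⟩))

theorem LipschitzWith.dirDerivLinftyNorm_nonneg (hf : LipschitzWith K f)
    (ξ : EuclideanSpace ℝ (Fin n)) : 0 ≤ dirDerivLinftyNorm n f ξ := by
  obtain ⟨x, hx⟩ := (hf.ae_abs_inner_gradient_le_dirDerivLinftyNorm ξ).exists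
  exact (abs_nonneg _).trans hx

theorem LipschitzWith.dirDerivLinftyNorm_add_le (hf : LipschitzWith K f)
    (ξ η : EuclideanSpace ℝ (Fin n)) :
    dirDerivLinftyNorm n f (ξ + η) ≤ dirDerivLinftyNorm n f ξ + dirDerivLinftyNorm n f η := by
  refine dirDerivLinftyNorm_le ?_
  filter_upwards [hf.ae_abs_inner_gradient_le_dirDerivLinftyNorm ξ,
    hf.ae_abs_inner_gradient_le_dirDerivLinftyNorm η] with x h1 h2
  rw [inner_add_right]
  exact (abs_add_le _ _).trans (add_le_add h1 h2)

theorem LipschitzWith.dirDerivLinftyNorm_smul (hf : LipschitzWith K f) (l : ℝ)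
    (ξ : EuclideanSpace ℝ (Fin n)) :
    dirDerivLinftyNorm n f (l • ξ) = |l| * dirDerivLinftyNorm n f ξ := by
  have hle : ∀ (l : ℝ) (ξ : EuclideanSpace ℝ (Fin n)),
      dirDerivLinftyNorm n f (l • ξ) ≤ |l| * dirDerivLinftyNorm n f ξ := by
    intro l ξ
    refine dirDerivLinftyNorm_le ?_
    filter_upwards [hf.ae_abs_inner_gradient_le_dirDerivLinftyNorm ξ] with x h1
    rw [inner_smul_right, abs_mul]
    exact mul_le_mul_of_nonneg_left h1 (abs_nonneg _)
  refine (hle l ξ).antisymm ?_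
  rcases eq_or_ne l 0 with rfl | hl
  · simpa using hf.dirDerivLinftyNorm_nonneg 0
  · have h := mul_le_mul_of_nonneg_left (hle l⁻¹ (l • ξ)) (abs_nonneg l)
    rwa [inv_smul_smul₀ hl, ← mul_assoc, ← abs_mul, mul_inv_cancel₀ hl, abs_one, one_mul] at h

theorem LipschitzWith.dirDerivLinftyNorm_le_mul_norm (hf : LipschitzWith K f)
    (ξ : EuclideanSpace ℝ (Fin n)) : dirDerivLinftyNorm n f ξ ≤ K * ‖ξ‖ :=
  dirDerivLinftyNorm_le (.of_forall fun x => hf.abs_inner_gradient_le x ξ)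

theorem LipschitzWith.lipschitzWith_dirDerivLinftyNorm (hf : LipschitzWith K f) :
    LipschitzWith K (dirDerivLinftyNorm n f) := by
  refine LipschitzWith.of_le_add_mul K fun ξ η => ?_
  calc dirDerivLinftyNorm n f ξ = dirDerivLinftyNorm n f (η + (ξ - η)) := by
        rw [add_sub_cancel]
    _ ≤ _ := hf.dirDerivLinftyNorm_add_le _ _
    _ ≤ _ := by
        rw [dist_eq_norm]
        exact add_le_add_right (hf.dirDerivLinftyNorm_le_mul_norm _) _

theorem LipschitzWith.dirDerivLinftyNorm_eq_zero_iff (hf : LipschitzWith K f) {β : ℝ} (hβ : 0 < β)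
    (hintegrable : Integrable fun x => Real.exp (β * f x)) (ξ : EuclideanSpace ℝ (Fin n)) :
    dirDerivLinftyNorm n f ξ = 0 ↔ ξ = 0 := by
  constructor
  · intro h
    by_contra hξ
    refine hf.not_integrable_exp_of_add_smul_eq hξ
      (hf.add_smul_eq_of_ae_inner_gradient_eq_zero ?_) hβ hintegrable
    filter_upwards [hf.ae_abs_inner_gradient_le_dirDerivLinftyNorm ξ] with x hx
    rw [h] at hx
    exact abs_nonpos_iff.1 hx
  · rintro rfl
    simpa using hf.dirDerivLinftyNorm_smul 0 0

theorem LipschitzWith.ae_forall_abs_inner_gradient_le_dirDerivLinftyNorm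
    (hf : LipschitzWith K f) :
    ∀ᵐ x, ∀ ξ, |⟪gradient f x, ξ⟫| ≤ dirDerivLinftyNorm n f ξ := by
  have h := ae_all_iff.2 fun k : ℕ =>
    hf.ae_abs_inner_gradient_le_dirDerivLinftyNorm
      (TopologicalSpace.denseSeq (EuclideanSpace ℝ (Fin n)) k)
  filter_upwards [h] with x hx ξ
  have hclosed : IsClosed {ξ | |⟪gradient f x, ξ⟫| ≤ dirDerivLinftyNorm n f ξ} :=
    isClosed_le (by fun_prop) hf.lipschitzWith_dirDerivLinftyNorm.continuous
  have hrange : Set.range (TopologicalSpace.denseSeq (EuclideanSpace ℝ (Fin n))) ⊆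
      {ξ | |⟪gradient f x, ξ⟫| ≤ dirDerivLinftyNorm n f ξ} := by
    rintro _ ⟨k, rfl⟩
    exact hx k
  exact closure_minimal hrange hclosed (TopologicalSpace.denseRange_denseSeq _ ξ)

/-- The essential supremum of the norm of `gradient f` dual to `dirDerivLinftyNorm n f` is at most
one, and it is positive as soon as `dirDerivLinftyNorm n f` is a norm. -/
theorem LipschitzWith.essSup_dual_dirDerivLinftyNorm_mem_Ioc (hf : LipschitzWith K f)
    {ξ : EuclideanSpace ℝ (Fin n)} (hξ : dirDerivLinftyNorm n f ξ ≠ 0) :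
    essSup (fun x => sSup {t : ℝ | ∃ y, dirDerivLinftyNorm n f y ≤ 1 ∧ t = ⟪gradient f x, y⟫})
      volume ∈ Set.Ioc (0 : ℝ) 1 := by
  set D : EuclideanSpace ℝ (Fin n) → ℝ := fun x =>
    sSup {t : ℝ | ∃ y, dirDerivLinftyNorm n f y ≤ 1 ∧ t = ⟪gradient f x, y⟫}
  have hzero : dirDerivLinftyNorm n f 0 = 0 := by simpa using hf.dirDerivLinftyNorm_smul 0 0
  have hbdd : ∀ᵐ x, (1 : ℝ) ∈ upperBounds
      {t : ℝ | ∃ y, dirDerivLinftyNorm n f y ≤ 1 ∧ t = ⟪gradient f x, y⟫} := by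
    filter_upwards [hf.ae_forall_abs_inner_gradient_le_dirDerivLinftyNorm] with x hx
    rintro _ ⟨y, hy, rfl⟩
    exact (le_abs_self _).trans ((hx y).trans hy)
  have hle : ∀ᵐ x, D x ≤ 1 := by
    filter_upwards [hbdd] with x hx
    exact csSup_le ⟨0, 0, by simp [hzero], by simp⟩ hx
  have hinner : ∀ᵐ x, ∀ y, dirDerivLinftyNorm n f y ≤ 1 → ⟪gradient f x, y⟫ ≤ D x := by
    filter_upwards [hbdd] with x hx y hy
    exact le_csSup ⟨1, hx⟩ ⟨y, hy, rfl⟩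
  have hnonneg : ∀ᵐ x, 0 ≤ D x := by
    filter_upwards [hinner] with x hx
    simpa using hx 0 (by simp [hzero])
  refine ⟨lt_of_not_ge fun hneg => hξ ?_, essSup_le_of_ae_le 1 hle
    (Filter.IsBoundedUnder.isCoboundedUnder_le ⟨0, by simpa using hnonneg⟩)⟩
  have hDess : ∀ᵐ x, D x ≤ essSup D volume := ae_le_essSup ⟨1, by simpa using hle⟩
  set c := dirDerivLinftyNorm n f ξ
  have hcpos : 0 < c := lt_of_le_of_ne (hf.dirDerivLinftyNorm_nonneg ξ) hξ.symm
  refine (dirDerivLinftyNorm_le ?_).antisymm hcpos.le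
  filter_upwards [hinner, hDess] with x h1 h2
  have hunit : ∀ s : ℝ, |s| = c⁻¹ → s * ⟪gradient f x, ξ⟫ ≤ 0 := by
    intro s hs
    rw [← inner_smul_right]
    refine (h1 _ ?_).trans (h2.trans hneg)
    rw [hf.dirDerivLinftyNorm_smul, hs, inv_mul_cancel₀ hcpos.ne']
  have hinv : 0 < c⁻¹ := inv_pos.2 hcpos
  have hp := hunit c⁻¹ (abs_of_pos hinv)
  have hm := hunit (-c⁻¹) (by rw [abs_neg, abs_of_pos hinv])
  rw [abs_le]
  constructor <;> nlinarith

end DirDeriv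

/-- Affine `L_∞` log-Sobolev inequality: for Lipschitz `f` with `∫ e^{βf} = 1`, assuming
Fujita's general `L_∞` log-Sobolev inequality for arbitrary norms `H`,
`Ent(e^{βf}) ≤ n log((β k_n / e) 𝓔_∞(f))`. -/
theorem affine_Linfty_log_Sobolev (n : ℕ) (hn : 1 ≤ n) (β : ℝ) (hβ : 0 < β)
    (f : EuclideanSpace ℝ (Fin n) → ℝ) (hf : ∃ K, LipschitzWith K f)
    (hnorm : (∫ x, Real.exp (β * f x)) = 1)
    (hFujita : ∀ H : EuclideanSpace ℝ (Fin n) → ℝ,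
      (∀ x y, H (x + y) ≤ H x + H y) →
      (∀ (l : ℝ) (x), H (l • x) = |l| * H x) →
      (∀ x, H x = 0 ↔ x = 0) →
      (∫ x, Real.exp (β * f x) * (β * f x)) ≤
        (n : ℝ) * Real.log ((β / Real.exp 1) *
          (∫ x, Real.exp (-(H x))) ^ (-(1 / (n : ℝ))) *
          essSup (fun x => sSup {t : ℝ | ∃ y, H y ≤ 1 ∧ t = ⟪gradient f x, y⟫}) volume)) :
    (∫ x, Real.exp (β * f x) * (β * f x)) ≤
      (n : ℝ) * Real.log (β * kn n / Real.exp 1 * affineEnergyInfty n f) := by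
  obtain ⟨K, hK⟩ := hf
  have : NeZero n := ⟨by omega⟩
  have hn0 : (0 : ℝ) < n := by exact_mod_cast hn
  have hintegrable : Integrable fun x => Real.exp (β * f x) :=
    .of_integral_ne_zero (by rw [hnorm]; exact one_ne_zero)
  have hdef := hK.dirDerivLinftyNorm_eq_zero_iff hβ hintegrable
  obtain ⟨ξ, hξ⟩ := exists_ne (0 : EuclideanSpace ℝ (Fin n))
  obtain ⟨hM0, hM1⟩ :=
    hK.essSup_dual_dirDerivLinftyNorm_mem_Ioc (fun h => hξ ((hdef ξ).1 h))
  have hF := hFujita (dirDerivLinftyNorm n f) hK.dirDerivLinftyNorm_add_le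
    hK.dirDerivLinftyNorm_smul hdef
  have hpolar := integral_exp_neg_eq_factorial_mul_integral_toSphere
    (volume : Measure (EuclideanSpace ℝ (Fin n)))
    hK.lipschitzWith_dirDerivLinftyNorm.continuous hK.dirDerivLinftyNorm_smul
    fun x hx => lt_of_le_of_ne (hK.dirDerivLinftyNorm_nonneg x) fun h => hx ((hdef x).1 h.symm)
  rw [finrank_euclideanSpace_fin] at hpolar
  have hJ : 0 ≤ ∫ ξ : Metric.sphere (0 : EuclideanSpace ℝ (Fin n)) 1,
      dirDerivLinftyNorm n f (ξ : EuclideanSpace ℝ (Fin n)) ^ (-(n : ℝ))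
        ∂(volume : Measure (EuclideanSpace ℝ (Fin n))).toSphere :=
    integral_nonneg fun ξ => Real.rpow_nonneg (hK.dirDerivLinftyNorm_nonneg _) _
  have hω : 0 < omegaN n :=
    ENNReal.toReal_pos (Metric.measure_ball_pos _ _ one_pos).ne' measure_ball_lt_top.ne
  have hfac : (n.factorial : ℝ) = n * ((n - 1).factorial : ℝ) := by
    exact_mod_cast (Nat.mul_factorial_pred (by omega)).symm
  have hfac0 : (0 : ℝ) < ((n - 1).factorial : ℝ) := by exact_mod_cast Nat.factorial_pos _
  have hconst : kn n * ((n : ℝ) * omegaN n) ^ (1 / (n : ℝ)) =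
      ((n - 1).factorial : ℝ) ^ (-(1 / (n : ℝ))) := by
    rw [kn, hfac, show (n : ℝ) * ((n - 1).factorial : ℝ) * omegaN n =
      ((n - 1).factorial : ℝ) * (n * omegaN n) by ring, Real.mul_rpow hfac0.le (by positivity),
      mul_assoc, ← Real.rpow_add (by positivity), neg_add_cancel, Real.rpow_zero, mul_one]
  have henergy : β * kn n / Real.exp 1 * affineEnergyInfty n f = β / Real.exp 1 *
      (∫ x, Real.exp (-(dirDerivLinftyNorm n f x))) ^ (-(1 / (n : ℝ))) := by
    rw [hpolar, Real.mul_rpow hfac0.le hJ, ← hconst, affineEnergyInfty]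
    ring
  rw [henergy]
  refine hF.trans (mul_le_mul_of_nonneg_left ?_ hn0.le)
  have hA : 0 ≤ β / Real.exp 1 *
      (∫ x, Real.exp (-(dirDerivLinftyNorm n f x))) ^ (-(1 / (n : ℝ))) :=
    mul_nonneg (by positivity)
      (Real.rpow_nonneg (integral_nonneg fun x => (Real.exp_pos _).le) _)
  rcases hA.eq_or_lt with hA0 | hApos
  · rw [← hA0, zero_mul]
  · exact Real.log_le_log (mul_pos hApos hM0) (mul_le_of_le_one_right hA hM1)
end
end
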